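/- Let G be the parallel join of a bracelet B_ℓ (a series join of ℓ ≥ 1 copies of R₂) and a single edge joining the two end terminals. Then τ(G) > 1/2. -/

import Mathlib

open SimpleGraph

noncomputable def numComp {V : Type*} (G : SimpleGraph V) (S : Set V) : ℕ :=
  Nat.card (SimpleGraph.induce Sᶜ G).ConnectedComponent

def IsCutset {V : Type*} (G : SimpleGraph V) (S : Set V) : Prop := 1 < numComp G S

noncomputable def toughness {V : Type*} (G : SimpleGraph V) : ℝ :=
  sInf {r : ℝ | ∃ S : Set V, IsCutset G S ∧ r = (S.ncard : ℝ) / (numComp G S : ℝ)}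

def IsToughSet {V : Type*} (G : SimpleGraph V) (S : Set V) : Prop :=
  IsCutset G S ∧ (S.ncard : ℝ) = toughness G * (numComp G S : ℝ)

def MinTough {V : Type*} (G : SimpleGraph V) (t : ℝ) : Prop :=
  toughness G = t ∧ ∀ e ∈ G.edgeSet, toughness (G.deleteEdges {e}) < t

def IsCutVertex {V : Type*} (G : SimpleGraph V) (x : V) : Prop := IsCutset G {x}

inductive SPTree (V : Type*) where
  | edge (u v : V) : SPTree V
  | series (l r : SPTree V) : SPTree V
  | parallel (l r : SPTree V) : SPTree V

namespace SPTree

def src {V : Type*} : SPTree V → V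
  | edge u _ => u
  | series l _ => l.src
  | parallel l _ => l.src

def tgt {V : Type*} : SPTree V → V
  | edge _ v => v
  | series _ r => r.tgt
  | parallel l _ => l.tgt

def verts {V : Type*} : SPTree V → Set V
  | edge u v => {u, v}
  | series l r => l.verts ∪ r.verts
  | parallel l r => l.verts ∪ r.verts

def edges {V : Type*} : SPTree V → Set (Sym2 V)
  | edge u v => {s(u, v)}
  | series l r => l.edges ∪ r.edges
  | parallel l r => l.edges ∪ r.edges

def WF {V : Type*} : SPTree V → Prop
  | edge u v => u ≠ v
  | series l r => l.WF ∧ r.WF ∧ l.tgt = r.src ∧ l.verts ∩ r.verts = {l.tgt}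
  | parallel l r => l.WF ∧ r.WF ∧ l.src = r.src ∧ l.tgt = r.tgt ∧
      l.verts ∩ r.verts = {l.src, l.tgt} ∧ Disjoint l.edges r.edges

end SPTree

/-- `G` is the series-parallel graph given by the (well-formed, spanning) sp-tree `T`. -/
def RepresentsSP {V : Type*} (G : SimpleGraph V) (T : SPTree V) : Prop :=
  T.WF ∧ T.verts = Set.univ ∧ G = SimpleGraph.fromEdgeSet T.edges

def IsSPGraph {V : Type*} (G : SimpleGraph V) : Prop := ∃ T : SPTree V, RepresentsSP G T

/-- `IsPathT t n` : the sp-tree `t` is a series join of edges forming a path of length `n`. -/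
inductive IsPathT {V : Type*} : SPTree V → ℕ → Prop
  | edge (u v : V) : IsPathT (.edge u v) 1
  | series {l r : SPTree V} {m n : ℕ} : IsPathT l m → IsPathT r n → IsPathT (.series l r) (m + n)

/-- `R₂` : the parallel join of two paths of length 2. -/
def IsR2 {V : Type*} (t : SPTree V) : Prop :=
  ∃ l r : SPTree V, t = .parallel l r ∧ IsPathT l 2 ∧ IsPathT r 2

/-- A bracelet `B_ℓ`: a series join of `ℓ ≥ 1` copies of `R₂`. -/
inductive IsBracelet {V : Type*} : SPTree V → Prop
  | single {t : SPTree V} : IsR2 t → IsBracelet t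
  | cons {t r : SPTree V} : IsR2 t → IsBracelet r → IsBracelet (.series t r)

/-!
Every cutset `S` satisfies `c(G - S) < 2|S|`, which gives `τ(G) > 1/2` because the infimum is
attained. Call a component of `G - S` *inner* for a piece `T` of the bracelet if it meets `T` but
contains neither terminal of `T`. Either no component is inner and the terminals are joined outside
`S`, or there are at most `2|S ∩ V(T)| - 2` inner components. This is clear for `R₂` and survives
series joins: a joining vertex in `S` is counted on both sides, which pays for the extra `2`, and
one outside `S` creates at most one new inner component. In `G` itself the closing edge puts
everything that is not inner into a single component.
-/

section Toughness

variable {V : Type*} [Finite V] {G : SimpleGraph V}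

theorem lt_toughness {t : ℝ} (hne : ∃ S, IsCutset G S)
    (h : ∀ S, IsCutset G S → t * numComp G S < S.ncard) : t < toughness G := by
  have hfin : {r : ℝ | ∃ S : Set V, IsCutset G S ∧ r = S.ncard / numComp G S}.Finite :=
    (Set.finite_range fun S : Set V => (S.ncard : ℝ) / numComp G S).subset
      fun r ⟨S, _, hr⟩ => ⟨S, hr.symm⟩
  obtain ⟨S₀, hS₀⟩ := hne
  refine (hfin.lt_csInf_iff ⟨_, S₀, hS₀, rfl⟩).2 ?_
  rintro _ ⟨S, hS, rfl⟩
  have hpos : (0 : ℝ) < numComp G S := by exact_mod_cast zero_lt_one.trans hS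
  exact (lt_div_iff₀ hpos).2 (h S hS)

theorem isCutset_compl_of_isIndepSet {I : Set V} (hI : G.IsIndepSet I) (hnt : I.Nontrivial) :
    IsCutset G Iᶜ := by
  have hbot : G.induce Iᶜᶜ = ⊥ := by
    rw [compl_compl, eq_bot_iff]
    exact fun u v huv => hI u.2 v.2 (G.ne_of_adj huv) huv
  obtain ⟨x, hx, y, hy, hxy⟩ := hnt
  refine Finite.one_lt_card_iff_nontrivial.2
    ⟨G.componentComplMk (not_not.2 hx), G.componentComplMk (not_not.2 hy), fun h => hxy ?_⟩
  have hreach := ConnectedComponent.exact h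
  rw [hbot, reachable_bot] at hreach
  exact congrArg Subtype.val hreach

end Toughness

namespace SPTree

variable {V : Type*} {T : SPTree V}

theorem src_mem_verts (T : SPTree V) : T.src ∈ T.verts := by
  induction T with
  | edge => exact Or.inl rfl
  | series _ _ hl _ => exact Or.inl hl
  | parallel _ _ hl _ => exact Or.inl hl

theorem tgt_mem_verts (T : SPTree V) : T.tgt ∈ T.verts := by
  induction T with
  | edge => exact Or.inr rfl
  | series _ _ _ hr => exact Or.inr hr
  | parallel _ _ hl _ => exact Or.inl hl

theorem mem_verts_of_mem_edges {e : Sym2 V} {v : V} (he : e ∈ T.edges) (hv : v ∈ e) :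
    v ∈ T.verts := by
  induction T with
  | edge u w =>
    obtain rfl : e = s(u, w) := he
    exact Sym2.mem_iff.1 hv
  | series l r hl hr => exact he.imp hl hr
  | parallel l r hl hr => exact he.imp hl hr

theorem WF.src_ne_tgt (hWF : T.WF) : T.src ≠ T.tgt := by
  induction T with
  | edge => exact hWF
  | series l r hl _ =>
    obtain ⟨hWFl, -, -, hinter⟩ := hWF
    intro (h : l.src = r.tgt)
    have hmem : l.src ∈ l.verts ∩ r.verts := ⟨l.src_mem_verts, h ▸ r.tgt_mem_verts⟩
    rw [hinter] at hmem
    exact hl hWFl hmem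
  | parallel _ _ hl _ => exact hl hWF.1

end SPTree

section Shape

variable {V : Type*} {T : SPTree V}

theorem IsPathT.length_pos {n : ℕ} (h : IsPathT T n) : 0 < n := by
  induction h with
  | edge => exact one_pos
  | series _ _ hm _ => exact Nat.add_pos_left hm _

theorem IsPathT.exists_eq_edge (h : IsPathT T 1) : ∃ u v, T = .edge u v := by
  generalize hn : 1 = n at h
  cases h with
  | edge u v => exact ⟨u, v, rfl⟩
  | series hl hr =>
    have := hl.length_pos
    have := hr.length_pos
    omega

theorem IsPathT.exists_eq_series_edge_edge (h : IsPathT T 2) :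
    ∃ u v z w, T = .series (.edge u v) (.edge z w) := by
  generalize hn : 2 = n at h
  cases h with
  | edge u v => omega
  | @series l r m n hl hr =>
    have := hl.length_pos
    have := hr.length_pos
    obtain ⟨rfl, rfl⟩ : m = 1 ∧ n = 1 := by omega
    obtain ⟨u, v, rfl⟩ := hl.exists_eq_edge
    obtain ⟨z, w, rfl⟩ := hr.exists_eq_edge
    exact ⟨u, v, z, w, rfl⟩

theorem IsR2.exists_fourCycle (h : IsR2 T) (hWF : T.WF) :
    ∃ x y, [T.src, T.tgt, x, y].Nodup ∧ T.verts = {T.src, T.tgt, x, y} ∧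
      T.edges = {s(T.src, x), s(x, T.tgt), s(T.src, y), s(y, T.tgt)} := by
  have hne := hWF.src_ne_tgt
  obtain ⟨l, r, rfl, hl, hr⟩ := h
  obtain ⟨a, x, x', b, rfl⟩ := hl.exists_eq_series_edge_edge
  obtain ⟨a', y, y', b', rfl⟩ := hr.exists_eq_series_edge_edge
  simp only [SPTree.WF, SPTree.src, SPTree.tgt, SPTree.verts, SPTree.edges] at hWF hne ⊢
  obtain ⟨⟨hax, hxb, rfl, -⟩, ⟨hay, hyb, rfl, -⟩, rfl, rfl, hinter, -⟩ := hWF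
  have hxy : x ≠ y := by
    rintro rfl
    have hmem : x ∈ ({a, b} : Set V) := hinter ▸ by simp
    exact hmem.elim hax.symm hxb
  exact ⟨x, y, by simp [hne, hax, hay, hxb.symm, hyb.symm, hxy], by grind, by grind⟩

theorem IsR2.exists_notMem_edges (h : IsR2 T) (hWF : T.WF) :
    ∃ x ∈ T.verts, ∃ y, x ≠ y ∧ x ≠ T.src ∧ x ≠ T.tgt ∧ s(x, y) ∉ T.edges := by
  obtain ⟨x, y, hnodup, hverts, hedges⟩ := h.exists_fourCycle hWF
  refine ⟨x, by simp [hverts], y, ?_⟩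
  simp only [hedges, Set.mem_insert_iff, Set.mem_singleton_iff, Sym2.eq_iff]
  grind

theorem IsBracelet.exists_notMem_edges (h : IsBracelet T) (hWF : T.WF) :
    ∃ x y, x ≠ y ∧ x ≠ T.src ∧ x ≠ T.tgt ∧ s(x, y) ∉ T.edges := by
  cases h with
  | single h =>
    obtain ⟨x, -, y, hxy⟩ := h.exists_notMem_edges hWF
    exact ⟨x, y, hxy⟩
  | @cons t r h _ =>
    obtain ⟨hWFt, -, -, hinter⟩ := hWF
    obtain ⟨x, hx, y, hxy, hsrc, htgt, hedge⟩ := h.exists_notMem_edges hWFt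
    have hxr : x ∉ r.verts := fun hxr => htgt <| hinter.subset ⟨hx, hxr⟩
    refine ⟨x, y, hxy, hsrc, fun hx => hxr (hx ▸ r.tgt_mem_verts), ?_⟩
    exact not_or.2 ⟨hedge, fun he => hxr (SPTree.mem_verts_of_mem_edges he (Sym2.mem_mk_left x y))⟩

theorem IsR2.exists_middle_vertices {G : SimpleGraph V} (h : IsR2 T) (hWF : T.WF)
    (hG : fromEdgeSet T.edges ≤ G) :
    ∃ x y, T.verts = {T.src, T.tgt, x, y} ∧ ∀ v ∈ ({x, y} : Set V),
      G.Adj v T.src ∧ G.Adj v T.tgt := by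
  obtain ⟨x, y, hnodup, hverts, hedges⟩ := h.exists_fourCycle hWF
  have hadj {u v : V} (hne : u ≠ v) (he : s(u, v) ∈ T.edges) : G.Adj u v :=
    hG ((fromEdgeSet_adj _).2 ⟨he, hne⟩)
  refine ⟨x, y, hverts, fun v hv => ?_⟩
  have hsrc : v ≠ T.src := by grind
  have htgt : v ≠ T.tgt := by grind
  rcases hv with rfl | rfl
  · exact ⟨(hadj hsrc.symm (by simp [hedges])).symm, hadj htgt (by simp [hedges])⟩
  · exact ⟨(hadj hsrc.symm (by simp [hedges])).symm, hadj htgt (by simp [hedges])⟩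

end Shape

section InnerComponents

variable {V : Type*} {G : SimpleGraph V} {S : Set V} {T l r : SPTree V}

theorem subsingleton_setOf_mem_componentCompl (G : SimpleGraph V) (S : Set V) (v : V) :
    {C : G.ComponentCompl S | v ∈ C}.Subsingleton :=
  fun _ ⟨_, hC⟩ _ ⟨_, hD⟩ => hC.symm.trans hD

/-- The components of `G - S` that meet the piece `T` of `G` but contain neither of its
terminals. Components are taken in all of `G`, so that they need not be tracked through joins. -/
def innerComponents (G : SimpleGraph V) (S : Set V) (T : SPTree V) : Set (G.ComponentCompl S) :=
  {C | (∃ v ∈ T.verts, v ∈ C) ∧ T.src ∉ C ∧ T.tgt ∉ C}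

/-- The induction hypothesis of the component count: either the piece `T` has no inner components
and its terminals are connected in `G - S`, or it has at most `2|S ∩ V(T)| - 2` inner components,
stated without subtraction. -/
def InnerComponentBound (G : SimpleGraph V) (S : Set V) (T : SPTree V) : Prop :=
  (innerComponents G S T = ∅ ∧ ∃ C : G.ComponentCompl S, T.src ∈ C ∧ T.tgt ∈ C) ∨
    (innerComponents G S T).ncard + 2 ≤ 2 * (S ∩ T.verts).ncard

/-- The components of `G - S` that a series join of `l` and `r` may add to the inner components of
the two parts: the one of the joining vertex, if it contains neither terminal of the join. -/
def joinComponents (G : SimpleGraph V) (S : Set V) (l r : SPTree V) : Set (G.ComponentCompl S) :=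
  {C | l.tgt ∈ C ∧ l.src ∉ C ∧ r.tgt ∉ C}

theorem innerComponents_series_subset (G : SimpleGraph V) (S : Set V) (hjoin : l.tgt = r.src) :
    innerComponents G S (.series l r) ⊆
      innerComponents G S l ∪ innerComponents G S r ∪ joinComponents G S l r := by
  rintro C ⟨⟨v, hv, hvC⟩, hsrc, htgt⟩
  by_cases hC : l.tgt ∈ C
  · exact Or.inr ⟨hC, hsrc, htgt⟩
  · refine Or.inl (hv.imp (fun hv => ?_) fun hv => ?_)
    · exact ⟨⟨v, hv, hvC⟩, hsrc, hC⟩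
    · exact ⟨⟨v, hv, hvC⟩, hjoin ▸ hC, htgt⟩

theorem joinComponents_eq_empty {C : G.ComponentCompl S} (hC : l.tgt ∈ C)
    (h : l.src ∈ C ∨ r.tgt ∈ C) : joinComponents G S l r = ∅ := by
  refine Set.eq_empty_of_forall_notMem fun D ⟨hD, hsrc, htgt⟩ => ?_
  obtain rfl : D = C := subsingleton_setOf_mem_componentCompl G S l.tgt hD hC
  exact h.elim hsrc htgt

variable [Finite V]

theorem ncard_innerComponents_series_le (G : SimpleGraph V) (S : Set V) (hjoin : l.tgt = r.src) :
    (innerComponents G S (.series l r)).ncard ≤ (innerComponents G S l).ncard +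
      (innerComponents G S r).ncard + (joinComponents G S l r).ncard :=
  calc
    (innerComponents G S (.series l r)).ncard
      ≤ (innerComponents G S l ∪ innerComponents G S r ∪ joinComponents G S l r).ncard :=
        Set.ncard_le_ncard (innerComponents_series_subset G S hjoin)
    _ ≤ (innerComponents G S l ∪ innerComponents G S r).ncard + (joinComponents G S l r).ncard :=
        Set.ncard_union_le _ _
    _ ≤ _ := Nat.add_le_add_right (Set.ncard_union_le _ _) _

theorem ncard_joinComponents_add_ncard_le (G : SimpleGraph V) (S : Set V) (l r : SPTree V) :
    (joinComponents G S l r).ncard + (S ∩ {l.tgt}).ncard ≤ 1 := by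
  by_cases hS : l.tgt ∈ S
  · have hempty : joinComponents G S l r = ∅ :=
      Set.eq_empty_of_forall_notMem fun C hC => ComponentCompl.notMem_of_mem hC.1 hS
    simp [hempty, hS]
  · rw [Set.inter_singleton_eq_empty.2 hS, Set.ncard_empty, add_zero,
      Set.ncard_le_one_iff_subsingleton]
    exact (subsingleton_setOf_mem_componentCompl G S l.tgt).anti fun C hC => hC.1

theorem InnerComponentBound.series (hl : InnerComponentBound G S l)
    (hr : InnerComponentBound G S r) (hjoin : l.tgt = r.src)
    (hinter : l.verts ∩ r.verts = {l.tgt}) : InnerComponentBound G S (.series l r) := by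
  have hcount : (S ∩ (l.verts ∪ r.verts)).ncard + (S ∩ {l.tgt}).ncard =
      (S ∩ l.verts).ncard + (S ∩ r.verts).ncard := by
    rw [← hinter, Set.inter_union_distrib_left, Set.inter_inter_distrib_left]
    exact Set.ncard_union_add_ncard_inter _ _
  have hinner := ncard_innerComponents_series_le G S hjoin
  have hjc := ncard_joinComponents_add_ncard_le G S l r
  have hS {C : G.ComponentCompl S} (hC : l.tgt ∈ C) : (S ∩ {l.tgt}).ncard = 0 := by
    rw [Set.inter_singleton_eq_empty.2 (ComponentCompl.notMem_of_mem hC), Set.ncard_empty]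
  rcases hl with ⟨hl, C, hsrc, hC⟩ | hl <;> rcases hr with ⟨hr, D, hD, htgt⟩ | hr
  · rw [← hjoin] at hD
    obtain rfl : C = D := subsingleton_setOf_mem_componentCompl G S l.tgt hC hD
    refine Or.inl ⟨?_, C, hsrc, htgt⟩
    simpa [hl, hr, joinComponents_eq_empty hC (Or.inl hsrc)] using
      innerComponents_series_subset G S hjoin
  · simp only [hl, joinComponents_eq_empty hC (Or.inl hsrc), Set.ncard_empty] at hinner
    have := hS hC
    exact Or.inr (by simp only [SPTree.verts]; omega)
  · rw [← hjoin] at hD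
    simp only [hr, joinComponents_eq_empty hD (Or.inr htgt), Set.ncard_empty] at hinner
    have := hS hD
    exact Or.inr (by simp only [SPTree.verts]; omega)
  · exact Or.inr (by simp only [SPTree.verts]; omega)

theorem IsR2.innerComponentBound (h : IsR2 T) (hWF : T.WF) (hG : fromEdgeSet T.edges ≤ G) :
    InnerComponentBound G S T := by
  obtain ⟨x, y, hverts, hadj⟩ := h.exists_middle_vertices hWF hG
  have hmiddle {C} (hC : C ∈ innerComponents G S T) : ∃ v ∈ ({x, y} : Set V), v ∈ C := by
    obtain ⟨⟨v, hv, hvC⟩, hsrc, htgt⟩ := hC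
    rw [hverts] at hv
    rcases hv with rfl | rfl | hv
    · exact absurd hvC hsrc
    · exact absurd hvC htgt
    · exact ⟨v, hv, hvC⟩
  by_cases hterm : T.src ∈ S ∧ T.tgt ∈ S
  · have hinner : (innerComponents G S T).ncard ≤ 1 + 1 :=
      calc
        _ ≤ ({C : G.ComponentCompl S | x ∈ C} ∪ {C | y ∈ C}).ncard :=
          Set.ncard_le_ncard fun C hC => by simpa using hmiddle hC
        _ ≤ _ := Set.ncard_union_le _ _
        _ ≤ 1 + 1 := Nat.add_le_add
          (Set.ncard_le_one_iff_subsingleton.2 (subsingleton_setOf_mem_componentCompl G S x))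
          (Set.ncard_le_one_iff_subsingleton.2 (subsingleton_setOf_mem_componentCompl G S y))
    have hpair : 1 < (S ∩ T.verts).ncard := (Set.one_lt_ncard_iff).2
      ⟨T.src, T.tgt, ⟨hterm.1, T.src_mem_verts⟩, ⟨hterm.2, T.tgt_mem_verts⟩, hWF.src_ne_tgt⟩
    exact Or.inr (by omega)
  · have hempty : innerComponents G S T = ∅ := by
      refine Set.eq_empty_of_forall_notMem fun C hC => hterm ?_
      obtain ⟨v, hv, hvC⟩ := hmiddle hC
      constructor
      · exact by_contra fun hS => hC.2.1 (ComponentCompl.mem_of_adj _ _ hvC hS (hadj v hv).1)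
      · exact by_contra fun hS => hC.2.2 (ComponentCompl.mem_of_adj _ _ hvC hS (hadj v hv).2)
    rcases (S ∩ T.verts).eq_empty_or_nonempty with hS | hS
    · have hnotMem {v : V} (hv : v ∈ T.verts) : v ∉ S := fun hvS => hS.subset ⟨hvS, hv⟩
      have hx : x ∉ S := hnotMem (by simp [hverts])
      obtain ⟨hsrc, htgt⟩ := hadj x (Or.inl rfl)
      have hmem := G.componentComplMk_mem hx
      exact Or.inl ⟨hempty, G.componentComplMk hx,
        ComponentCompl.mem_of_adj _ _ hmem (hnotMem T.src_mem_verts) hsrc,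
        ComponentCompl.mem_of_adj _ _ hmem (hnotMem T.tgt_mem_verts) htgt⟩
    · have hpos := (Set.ncard_pos).2 hS
      exact Or.inr (by rw [hempty, Set.ncard_empty]; omega)

theorem IsBracelet.innerComponentBound (h : IsBracelet T) (hWF : T.WF)
    (hG : fromEdgeSet T.edges ≤ G) : InnerComponentBound G S T := by
  induction h with
  | single h => exact h.innerComponentBound hWF hG
  | cons h _ ih =>
    obtain ⟨hWFt, hWFr, hjoin, hinter⟩ := hWF
    have ht := h.innerComponentBound (S := S) hWFt
      ((fromEdgeSet_mono Set.subset_union_left).trans hG)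
    exact ht.series (ih hWFr ((fromEdgeSet_mono Set.subset_union_right).trans hG)) hjoin hinter

theorem numComp_le_ncard_innerComponents_add_one (hverts : T.verts = Set.univ)
    (hclosed : G.Adj T.src T.tgt) : numComp G S ≤ (innerComponents G S T).ncard + 1 := by
  have hterminal : {C : G.ComponentCompl S | T.src ∈ C ∨ T.tgt ∈ C}.Subsingleton := by
    have hcross {C D : G.ComponentCompl S} (hC : T.src ∈ C) (hD : T.tgt ∈ D) : C = D :=
      subsingleton_setOf_mem_componentCompl G S T.tgt
        (ComponentCompl.mem_of_adj _ _ hC (ComponentCompl.notMem_of_mem hD) hclosed) hD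
    rintro C (hC | hC) D (hD | hD)
    · exact subsingleton_setOf_mem_componentCompl G S _ hC hD
    · exact hcross hC hD
    · exact (hcross hD hC).symm
    · exact subsingleton_setOf_mem_componentCompl G S _ hC hD
  have hcover (C : G.ComponentCompl S) :
      C ∈ innerComponents G S T ∪ {C | T.src ∈ C ∨ T.tgt ∈ C} := by
    obtain ⟨v, hv⟩ := C.nonempty
    by_cases hC : T.src ∈ C ∨ T.tgt ∈ C
    · exact Or.inr hC
    · exact Or.inl ⟨⟨v, hverts ▸ Set.mem_univ v, hv⟩, not_or.1 hC⟩
  calc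
    numComp G S = (Set.univ : Set (G.ComponentCompl S)).ncard := (Set.ncard_univ _).symm
    _ ≤ (innerComponents G S T ∪ {C | T.src ∈ C ∨ T.tgt ∈ C}).ncard :=
      Set.ncard_le_ncard fun C _ => hcover C
    _ ≤ _ := Set.ncard_union_le _ _
    _ ≤ (innerComponents G S T).ncard + 1 :=
      Nat.add_le_add_left (Set.ncard_le_one_iff_subsingleton.2 hterminal) _

theorem InnerComponentBound.numComp_lt (h : InnerComponentBound G S T)
    (hverts : T.verts = Set.univ) (hclosed : G.Adj T.src T.tgt) (hS : IsCutset G S) :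
    numComp G S < 2 * S.ncard := by
  have hle := numComp_le_ncard_innerComponents_add_one (S := S) hverts hclosed
  have hone : 1 < numComp G S := hS
  rcases h with ⟨hempty, -⟩ | hbound
  · rw [hempty, Set.ncard_empty] at hle
    omega
  · rw [hverts, Set.inter_univ] at hbound
    omega

end InnerComponents

/-- If `G` is the parallel join of a bracelet `B_ℓ` and a single edge joining the two end
terminals, then `τ(G) > 1/2`. -/
theorem bracelet_plus_edge_toughness {V : Type*} [Fintype V]
    (T : SPTree V) (hWF : T.WF) (hverts : T.verts = Set.univ) (hbr : IsBracelet T)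
    (G : SimpleGraph V)
    (hG : G = SimpleGraph.fromEdgeSet (T.edges ∪ {s(T.src, T.tgt)})) :
    1 / 2 < toughness G := by
  have hadj (u v : V) : G.Adj u v ↔ s(u, v) ∈ T.edges ∪ {s(T.src, T.tgt)} ∧ u ≠ v := by
    rw [hG, fromEdgeSet_adj]
  refine lt_toughness ?_ fun S hS => ?_
  · obtain ⟨x, y, hxy, hsrc, htgt, hedge⟩ := hbr.exists_notMem_edges hWF
    have hnadj : ¬ G.Adj x y := by simp [hadj, hedge, hsrc, htgt]
    have hI : G.IsIndepSet {x, y} :=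
      Set.pairwise_pair.2 fun _ => ⟨hnadj, mt Adj.symm hnadj⟩
    exact ⟨_, isCutset_compl_of_isIndepSet hI (Set.nontrivial_pair hxy)⟩
  · have hT : fromEdgeSet T.edges ≤ G := hG ▸ fromEdgeSet_mono Set.subset_union_left
    have hclosed : G.Adj T.src T.tgt := (hadj _ _).2 ⟨Or.inr rfl, hWF.src_ne_tgt⟩
    have hlt := (hbr.innerComponentBound hWF hT).numComp_lt hverts hclosed hS
    have hltR : (numComp G S : ℝ) < 2 * S.ncard := by exact_mod_cast hlt
    linarith
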